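/- Consider the binary SV source with parameter δ, 0 < δ < 1/2. Let Γ : {0,1}^n → {0,1} be a deterministic extractor and suppose exactly x strings in {0,1}^n are mapped to 0 by Γ; let x = (x_1 x_2 … x_n)_2 be the n-bit binary expansion of x (x_1 the most significant bit). Then the maximum, over all adversary strategies, of the probability that the extracted bit is 0 is at least (0.x_1 … x_n)_δ. Moreover, equality holds when the x strings mapped to 0 form a left prefix, i.e., Γ(y_1,…,y_n) = 0 if and only if (y_1 … y_n)_2 < x. -/

import Mathlib

/-!
The optimal adversary can be analysed one bit at a time: after fixing the first bit the problem
splits into two problems of length `n`, and the best mixture of values `V₀, V₁` is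
`(1 - δ) max + δ min`. The function `fval δ n x` is the base-`δ` value of the `n`-bit integer `x`,
extended to `x = 2 ^ n` by the value `1`; it obeys `fval (n+1) x = (1 - δ) fval n x` for `x ≤ 2 ^ n`
and `fval (n+1) (2 ^ n + y) = (1 - δ) + δ fval n y`.

The lower bound follows by induction from the inequality
`fval (n+1) (a + b) ≤ (1 - δ) fval n a + δ fval n b` for `b ≤ a ≤ 2 ^ n`, where `a, b` count the
zeros of the two restrictions of the extractor. This inequality is proved in `fval_key`
by a simultaneous induction with subadditivity of `fval n` and its dual
`1 + fval n (u + v - 2 ^ n) ≤ fval n u + fval n v`.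

For a left prefix, one of the two restrictions is trivial (all ones in the second half, or all zeros
in the first half) and the other is a left prefix, so an induction bounds every strategy by `fval`.
-/

open Finset

/-- `s_x(i)`: the number of ones among the bits of `x` preceding position `i`. -/
def sBits {n : ℕ} (x : Fin n → Bool) (i : Fin n) : ℕ :=
  (univ.filter fun j : Fin n => j < i ∧ x j = true).card

/-- The base-`δ` expansion `(0.x₁…x_n)_δ = ∑ᵢ xᵢ (1−δ)^i (δ/(1−δ))^{s_x(i)}`
(indices starting from 1); for `δ = 1/2` this is the usual binary expansion. -/
noncomputable def valD (δ : ℝ) {n : ℕ} (x : Fin n → Bool) : ℝ :=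
  ∑ i, if x i = true then (1 - δ) ^ (i.1 + 1) * (δ / (1 - δ)) ^ sBits x i else 0

/-- The integer `(x₁…x_n)₂` with most significant bit first. -/
def binVal {n : ℕ} (x : Fin n → Bool) : ℕ :=
  ∑ i, if x i = true then 2 ^ (n - 1 - i.1) else 0

/-- The history (first `i` bits) of a bit sequence `c` of length `n`. -/
def histOf {n : ℕ} (c : Fin n → Bool) (i : Fin n) : Fin i.1 → Bool :=
  fun j => c ⟨j.1, j.2.trans i.2⟩

/-- The probability of the bit sequence `c` when the adversary strategy `q` gives
the conditional probability `q i h` of the next bit being `0` (= `false`) after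
history `h`. -/
def binSeqProb {n : ℕ} (q : (i : Fin n) → (Fin i.1 → Bool) → ℝ)
    (c : Fin n → Bool) : ℝ :=
  ∏ i, if c i = false then q i (histOf c i) else 1 - q i (histOf c i)

/-- The set of probabilities, over all adversary strategies of the binary SV source
with parameter `δ`, that the extracted bit `Γ(C₁,…,C_n)` equals `0` (= `false`). -/
def binPrSet (δ : ℝ) {n : ℕ} (Γ : (Fin n → Bool) → Bool) : Set ℝ :=
  {r | ∃ q : (i : Fin n) → (Fin i.1 → Bool) → ℝ,
    (∀ i h, δ ≤ q i h ∧ q i h ≤ 1 - δ) ∧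
    r = ∑ c ∈ univ.filter (fun c => Γ c = false), binSeqProb q c}

/-! ### The base-`δ` value of an integer and its inequalities -/

/-- The base-`δ` value of the integer `x` written with `n` bits, for `x ≤ 2 ^ n`;
the value at `x = 2 ^ n`, which has no `n`-bit expansion, is `1`. -/
noncomputable def fval (δ : ℝ) : ℕ → ℕ → ℝ
  | 0, x => if x = 0 then 0 else 1
  | n + 1, x => if x < 2 ^ n then (1 - δ) * fval δ n x else (1 - δ) + δ * fval δ n (x - 2 ^ n)

lemma fval_zero (δ : ℝ) (n : ℕ) : fval δ n 0 = 0 := by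
  induction n with
  | zero => simp [fval]
  | succ n ih => simp [fval, ih]

lemma fval_add (δ : ℝ) (n y : ℕ) :
    fval δ (n + 1) (2 ^ n + y) = (1 - δ) + δ * fval δ n y := by
  simp [fval]

lemma fval_two_pow (δ : ℝ) (n : ℕ) : fval δ n (2 ^ n) = 1 := by
  induction n with
  | zero => simp [fval]
  | succ n ih => rw [pow_succ, mul_two, fval_add, ih]; ring

lemma fval_of_le (δ : ℝ) (n x : ℕ) (h : x ≤ 2 ^ n) :
    fval δ (n + 1) x = (1 - δ) * fval δ n x := by
  rcases h.lt_or_eq with h | h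
  · simp [fval, h]
  · have := fval_add δ n 0
    rw [add_zero, fval_zero] at this
    rw [h, this, fval_two_pow]; ring

lemma fval_mem (δ : ℝ) (h0 : 0 < δ) (h1 : δ < 1 / 2) (n x : ℕ) :
    0 ≤ fval δ n x ∧ fval δ n x ≤ 1 := by
  induction n generalizing x with
  | zero => unfold fval; split_ifs <;> norm_num
  | succ n ih =>
    unfold fval
    split_ifs
    · obtain ⟨h2, h3⟩ := ih x
      constructor <;> nlinarith
    · obtain ⟨h2, h3⟩ := ih (x - 2 ^ n)
      constructor <;> nlinarith

/-- The concavity-type inequality for one adversary step, together with subadditivity and its dual,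
which the induction needs at the same time. -/
lemma fval_key (δ : ℝ) (h0 : 0 < δ) (h1 : δ < 1 / 2) (n : ℕ) :
    (∀ a b, b ≤ a → a ≤ 2 ^ n →
      fval δ (n + 1) (a + b) ≤ (1 - δ) * fval δ n a + δ * fval δ n b) ∧
    (∀ u v, v ≤ u → u + v ≤ 2 ^ n → fval δ n (u + v) ≤ fval δ n u + fval δ n v) ∧
    (∀ u v w, v ≤ u → u ≤ 2 ^ n → u + v = 2 ^ n + w →
      1 + fval δ n w ≤ fval δ n u + fval δ n v) := by
  induction n with
  | zero =>
    refine ⟨?_, ?_, ?_⟩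
    · intro a b hb ha
      simp only [pow_zero] at ha
      interval_cases a <;> interval_cases b <;> simp [fval]
    · intro u v hv hu
      simp only [pow_zero] at hu
      have : v = 0 := by omega
      subst this
      simp [fval]
    · intro u v w hv hu hw
      simp only [pow_zero] at hu hw
      have : u = 1 := by omega
      subst this
      have : w = v := by omega
      subst this
      simp [fval]
  | succ n ih =>
    obtain ⟨P, S, T⟩ := ih
    have hN : 2 ^ (n + 1) = 2 ^ n + 2 ^ n := by ring
    -- Subadditivity and its dual are symmetric in `u` and `v`.
    have S' : ∀ u v, u + v ≤ 2 ^ n → fval δ n (u + v) ≤ fval δ n u + fval δ n v := by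
      intro u v h
      rcases le_total v u with h' | h'
      · exact S u v h' h
      · have := S v u h' (by omega)
        rw [add_comm u v]; linarith
    have T' : ∀ u v w, u ≤ 2 ^ n → v ≤ 2 ^ n → u + v = 2 ^ n + w →
        1 + fval δ n w ≤ fval δ n u + fval δ n v := by
      intro u v w hu hv h
      rcases le_total v u with h' | h'
      · exact T u v w h' hu h
      · have := T v u w h' hv (by omega)
        linarith
    have B := fval_mem δ h0 h1 n
    refine ⟨?_, ?_, ?_⟩
    · intro a b hb ha
      rcases le_total a (2 ^ n) with haN | haN
      · rw [fval_of_le δ (n + 1) (a + b) (by omega), fval_of_le δ n a haN,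
          fval_of_le δ n b (by omega)]
        have := P a b hb haN
        nlinarith
      obtain ⟨a', rfl⟩ := Nat.exists_eq_add_of_le haN
      rcases le_total b (2 ^ n) with hbN | hbN
      · rw [fval_add, fval_of_le δ n b hbN]
        rcases le_total (a' + b) (2 ^ n) with hs | hs
        · rw [fval_of_le δ (n + 1) _ (by omega), add_assoc, fval_add]
          have := S' a' b hs
          have hc : 0 ≤ (1 - δ) * δ := by nlinarith
          nlinarith [mul_le_mul_of_nonneg_left this hc]
        · obtain ⟨w, hw⟩ := Nat.exists_eq_add_of_le hs
          have e : 2 ^ n + a' + b = 2 ^ (n + 1) + w := by omega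
          rw [e, fval_add, fval_of_le δ n w (by omega)]
          have := T' a' b w (by omega) hbN hw
          have hc : 0 ≤ (1 - δ) * δ := by nlinarith
          nlinarith [mul_le_mul_of_nonneg_left this hc]
      · obtain ⟨b', rfl⟩ := Nat.exists_eq_add_of_le hbN
        have e : 2 ^ n + a' + (2 ^ n + b') = 2 ^ (n + 1) + (a' + b') := by omega
        rw [e, fval_add, fval_add, fval_add]
        have := P a' b' (by omega) (by omega)
        nlinarith
    · intro u v hv hu
      rcases le_total u (2 ^ n) with huN | huN
      · rw [fval_of_le δ n u huN, fval_of_le δ n v (by omega)]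
        have := P u v hv huN
        nlinarith [(B v).1]
      · obtain ⟨u', rfl⟩ := Nat.exists_eq_add_of_le huN
        rw [add_assoc, fval_add, fval_add, fval_of_le δ n v (by omega)]
        have := S' u' v (by omega)
        nlinarith [(B v).1]
    · intro u v w hv hu hw
      obtain ⟨u', rfl⟩ := Nat.exists_eq_add_of_le (show 2 ^ n ≤ u by omega)
      rw [fval_add]
      rcases le_total v (2 ^ n) with hvN | hvN
      · rw [fval_of_le δ n v hvN, fval_of_le δ n w (by omega)]
        have := T' u' v w (by omega) hvN (by omega)
        nlinarith [(B u').2]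
      · obtain ⟨v', rfl⟩ := Nat.exists_eq_add_of_le hvN
        have e : w = u' + v' := by omega
        rw [e, fval_add]
        have := P u' v' (by omega) (by omega)
        nlinarith [(B u').2]

/-! ### Expansions and their first bit -/

lemma binVal_cons {n : ℕ} (b : Bool) (x : Fin n → Bool) :
    binVal (Fin.cons b x : Fin (n + 1) → Bool) = (if b = true then 2 ^ n else 0) + binVal x := by
  unfold binVal
  rw [Fin.sum_univ_succ]
  simp only [Fin.cons_zero, Fin.cons_succ, Fin.val_succ, Fin.val_zero]
  congr 1
  refine Finset.sum_congr rfl fun i _ => ?_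
  rw [show n + 1 - 1 - (i.1 + 1) = n - 1 - i.1 by omega]

lemma binVal_lt {n : ℕ} (x : Fin n → Bool) : binVal x < 2 ^ n := by
  induction n with
  | zero => simp [binVal]
  | succ n ih =>
    rw [← Fin.cons_self_tail x, binVal_cons, pow_succ]
    have := ih (Fin.tail x)
    split_ifs <;> omega

lemma sBits_cons_zero {n : ℕ} (b : Bool) (x : Fin n → Bool) :
    sBits (Fin.cons b x : Fin (n + 1) → Bool) 0 = 0 := by
  simp [sBits]

lemma sBits_cons_succ {n : ℕ} (b : Bool) (x : Fin n → Bool) (i : Fin n) :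
    sBits (Fin.cons b x : Fin (n + 1) → Bool) i.succ = (if b = true then 1 else 0) + sBits x i := by
  unfold sBits
  rw [Finset.card_filter, Finset.card_filter, Fin.sum_univ_succ]
  simp

lemma valD_cons (δ : ℝ) (h1 : δ < 1 / 2) {n : ℕ} (b : Bool) (x : Fin n → Bool) :
    valD δ (Fin.cons b x : Fin (n + 1) → Bool) =
      if b = true then (1 - δ) + δ * valD δ x else (1 - δ) * valD δ x := by
  have hd : (1 - δ) ≠ 0 := by linarith
  unfold valD
  rw [Fin.sum_univ_succ]
  simp only [Fin.cons_zero, Fin.cons_succ, Fin.val_succ, Fin.val_zero, sBits_cons_zero,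
    sBits_cons_succ]
  cases b
  · simp only [Bool.false_eq_true, if_false, zero_add, Finset.mul_sum]
    refine Finset.sum_congr rfl fun i _ => ?_
    split_ifs
    · ring
    · ring
  · simp only [if_true, zero_add, Finset.mul_sum, pow_one, pow_zero, mul_one]
    congr 1
    refine Finset.sum_congr rfl fun i _ => ?_
    split_ifs
    · rw [pow_add (δ / (1 - δ)), pow_one, pow_succ (1 - δ) (i.1 + 1)]
      field_simp
    · ring

lemma valD_eq_fval (δ : ℝ) (h1 : δ < 1 / 2) {n : ℕ} (x : Fin n → Bool) :
    valD δ x = fval δ n (binVal x) := by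
  induction n with
  | zero => simp [valD, binVal, fval]
  | succ n ih =>
    rw [← Fin.cons_self_tail x, binVal_cons, valD_cons δ h1, ih]
    split_ifs
    · rw [fval_add]
    · rw [zero_add, fval_of_le _ _ _ (binVal_lt _).le]

/-! ### Splitting strategies at the first bit -/

/-- The probability that the bit extracted by `Γ` is `0` under the strategy `q`. -/
def prZero {n : ℕ} (q : (i : Fin n) → (Fin i.1 → Bool) → ℝ) (Γ : (Fin n → Bool) → Bool) : ℝ :=
  ∑ c ∈ univ.filter (fun c => Γ c = false), binSeqProb q c

/-- The strategy on the remaining `n` bits after the first bit came out as `b`. -/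
def tailStrat {n : ℕ} (q : (i : Fin (n + 1)) → (Fin i.1 → Bool) → ℝ) (b : Bool) :
    (i : Fin n) → (Fin i.1 → Bool) → ℝ :=
  fun i h => q i.succ (Fin.cons b h : Fin (i.1 + 1) → Bool)

/-- The strategy that outputs a first `0` with probability `p` and then follows `r b`,
where `b` is the first bit. -/
def consStrat {n : ℕ} (p : ℝ) (r : Bool → (i : Fin n) → (Fin i.1 → Bool) → ℝ) :
    (i : Fin (n + 1)) → (Fin i.1 → Bool) → ℝ :=
  fun i => Fin.cases (motive := fun i => (Fin i.1 → Bool) → ℝ) (fun _ => p)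
    (fun i h => r (h (0 : Fin (i.1 + 1))) i (Fin.tail (n := i.1) (α := fun _ => Bool) h)) i

lemma tailStrat_consStrat {n : ℕ} (p : ℝ) (r : Bool → (i : Fin n) → (Fin i.1 → Bool) → ℝ)
    (b : Bool) : tailStrat (consStrat p r) b = r b := by
  funext i h
  rfl

lemma binSeqProb_cons {n : ℕ} (q : (i : Fin (n + 1)) → (Fin i.1 → Bool) → ℝ) (b : Bool)
    (c : Fin n → Bool) :
    binSeqProb q (Fin.cons b c : Fin (n + 1) → Bool) =
      (if b = false then q 0 Fin.elim0 else 1 - q 0 Fin.elim0) * binSeqProb (tailStrat q b) c := by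
  have h0 : histOf (Fin.cons b c : Fin (n + 1) → Bool) 0 = Fin.elim0 := by
    funext j; exact j.elim0
  have hs : ∀ i : Fin n, histOf (Fin.cons b c : Fin (n + 1) → Bool) i.succ =
      (Fin.cons b (histOf c i) : Fin (i.1 + 1) → Bool) := by
    intro i
    funext j
    refine Fin.cases ?_ (fun k => ?_) (j : Fin (i.1 + 1))
    · rfl
    · rfl
  unfold binSeqProb
  rw [Fin.prod_univ_succ]
  simp only [h0, hs, Fin.cons_zero, Fin.cons_succ, tailStrat]

lemma sum_bits_cons {M : Type*} [AddCommMonoid M] {n : ℕ} (F : (Fin (n + 1) → Bool) → M) :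
    ∑ c, F c = ∑ c : Fin n → Bool, F (Fin.cons false c) + ∑ c : Fin n → Bool, F (Fin.cons true c) := by
  rw [← (Fin.consEquiv fun _ : Fin (n + 1) => Bool).sum_comp, Fintype.sum_prod_type]
  simp [Fin.consEquiv, add_comm]

lemma prZero_succ {n : ℕ} (q : (i : Fin (n + 1)) → (Fin i.1 → Bool) → ℝ)
    (Γ : (Fin (n + 1) → Bool) → Bool) :
    prZero q Γ =
      q 0 Fin.elim0 * prZero (tailStrat q false) (fun c => Γ (Fin.cons false c)) +
      (1 - q 0 Fin.elim0) * prZero (tailStrat q true) (fun c => Γ (Fin.cons true c)) := by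
  unfold prZero
  simp only [Finset.sum_filter]
  rw [sum_bits_cons]
  simp only [binSeqProb_cons, Finset.mul_sum, mul_ite, mul_zero]
  simp

lemma card_succ {n : ℕ} (Γ : (Fin (n + 1) → Bool) → Bool) :
    (univ.filter fun c => Γ c = false).card =
      (univ.filter fun c : Fin n → Bool => Γ (Fin.cons false c) = false).card +
      (univ.filter fun c : Fin n → Bool => Γ (Fin.cons true c) = false).card := by
  simp only [Finset.card_filter]
  rw [sum_bits_cons]

lemma card_le_two_pow {n : ℕ} (Γ : (Fin n → Bool) → Bool) :
    (univ.filter fun c => Γ c = false).card ≤ 2 ^ n := by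
  refine (Finset.card_filter_le _ _).trans ?_
  simp

/-! ### Bounds on the adversary -/

lemma prZero_le_one (δ : ℝ) (h0 : 0 < δ) {n : ℕ}
    (q : (i : Fin n) → (Fin i.1 → Bool) → ℝ) (hq : ∀ i h, δ ≤ q i h ∧ q i h ≤ 1 - δ)
    (Γ : (Fin n → Bool) → Bool) : prZero q Γ ≤ 1 := by
  induction n with
  | zero =>
    unfold prZero
    rw [Finset.sum_filter]
    simp only [binSeqProb, Finset.univ_eq_empty, Finset.prod_empty, Fintype.sum_unique]
    split_ifs <;> norm_num
  | succ n ih =>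
    rw [prZero_succ]
    have a := ih (tailStrat q false) (fun i h => hq _ _) (fun c => Γ (Fin.cons false c))
    have b := ih (tailStrat q true) (fun i h => hq _ _) (fun c => Γ (Fin.cons true c))
    obtain ⟨c, d⟩ := hq 0 Fin.elim0
    nlinarith

/-- Some strategy achieves at least the base-`δ` value of the number of zeros of `Γ`: it biases the
first bit towards the half with more zeros. -/
lemma exists_strat (δ : ℝ) (h0 : 0 < δ) (h1 : δ < 1 / 2) {n : ℕ} (Γ : (Fin n → Bool) → Bool) :
    ∃ q : (i : Fin n) → (Fin i.1 → Bool) → ℝ, (∀ i h, δ ≤ q i h ∧ q i h ≤ 1 - δ) ∧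
      fval δ n (univ.filter fun c => Γ c = false).card ≤ prZero q Γ := by
  induction n with
  | zero =>
    refine ⟨fun i => i.elim0, fun i => i.elim0, ?_⟩
    unfold prZero
    rw [Finset.sum_filter, Finset.card_filter]
    simp only [binSeqProb, Finset.univ_eq_empty, Finset.prod_empty, Fintype.sum_unique]
    split_ifs <;> simp [fval]
  | succ n ih =>
    choose r hr hv using fun b : Bool => ih (fun c => Γ (Fin.cons b c))
    have hcons : ∀ p, δ ≤ p → p ≤ 1 - δ →
        ∀ i h, δ ≤ consStrat p r i h ∧ consStrat p r i h ≤ 1 - δ := by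
      intro p hp hp' i
      refine Fin.cases (fun _ => ⟨hp, hp'⟩) (fun i h => hr _ _ _) i
    have hpr : ∀ p, prZero (consStrat p r) Γ =
        p * prZero (r false) (fun c => Γ (Fin.cons false c)) +
        (1 - p) * prZero (r true) (fun c => Γ (Fin.cons true c)) := by
      intro p
      rw [prZero_succ, tailStrat_consStrat, tailStrat_consStrat]
      rfl
    rw [card_succ]
    have hf := hv false
    have ht := hv true
    have cf := card_le_two_pow (fun c : Fin n → Bool => Γ (Fin.cons false c))
    have ct := card_le_two_pow (fun c : Fin n → Bool => Γ (Fin.cons true c))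
    have key := (fval_key δ h0 h1 n).1
    rcases le_total (univ.filter fun c : Fin n → Bool => Γ (Fin.cons true c) = false).card
      (univ.filter fun c : Fin n → Bool => Γ (Fin.cons false c) = false).card with h | h
    · refine ⟨consStrat (1 - δ) r, hcons _ (by linarith) le_rfl, ?_⟩
      rw [hpr]
      refine (key _ _ h cf).trans ?_
      nlinarith
    · refine ⟨consStrat δ r, hcons _ le_rfl (by linarith), ?_⟩
      rw [hpr, add_comm (Finset.card _)]
      refine (key _ _ h ct).trans ?_
      nlinarith

/-- Against a left prefix of size `x` no strategy exceeds the base-`δ` value of `x`. -/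
lemma prZero_prefix_le (δ : ℝ) (h0 : 0 < δ) (h1 : δ < 1 / 2) {n : ℕ}
    (q : (i : Fin n) → (Fin i.1 → Bool) → ℝ) (hq : ∀ i h, δ ≤ q i h ∧ q i h ≤ 1 - δ)
    (Γ : (Fin n → Bool) → Bool) (x : ℕ) (hΓ : ∀ y, Γ y = false ↔ binVal y < x) :
    prZero q Γ ≤ fval δ n x := by
  induction n generalizing x with
  | zero =>
    unfold prZero
    rw [Finset.sum_filter]
    simp only [binSeqProb, Finset.univ_eq_empty, Finset.prod_empty, Fintype.sum_unique, hΓ]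
    rcases Nat.eq_zero_or_pos x with rfl | hx
    · simp [fval]
    · simp [fval, hx.ne']
      split_ifs <;> norm_num
  | succ n ih =>
    rw [prZero_succ]
    obtain ⟨c, d⟩ := hq 0 Fin.elim0
    rcases le_total x (2 ^ n) with hx | hx
    · rw [fval_of_le δ n x hx]
      have a := ih (tailStrat q false) (fun i h => hq _ _) (fun c => Γ (Fin.cons false c)) x
        (fun y => by rw [hΓ, binVal_cons]; simp)
      have b : prZero (tailStrat q true) (fun c => Γ (Fin.cons true c)) = 0 := by
        unfold prZero
        rw [Finset.sum_filter]
        refine Finset.sum_eq_zero fun y _ => if_neg ?_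
        rw [hΓ, binVal_cons, if_pos rfl]
        omega
      rw [b]
      nlinarith [(fval_mem δ h0 h1 n x).1]
    · obtain ⟨y, rfl⟩ := Nat.exists_eq_add_of_le hx
      rw [fval_add]
      have a := prZero_le_one δ h0 (tailStrat q false) (fun i h => hq _ _)
        (fun c => Γ (Fin.cons false c))
      have b := ih (tailStrat q true) (fun i h => hq _ _) (fun c => Γ (Fin.cons true c)) y
        (fun z => by rw [hΓ, binVal_cons]; simp)
      have e := (fval_mem δ h0 h1 n y).2
      calc _ ≤ q 0 Fin.elim0 * 1 + (1 - q 0 Fin.elim0) * fval δ n y := by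
            gcongr <;> linarith
        _ ≤ _ := by nlinarith

/-- For the binary SV source with parameter `δ`, if the extractor
`Γ` maps exactly `x = (x₁…x_n)₂` strings to `0`, then the maximum over adversary
strategies of the probability that the extracted bit is `0` is at least
`(0.x₁…x_n)_δ`, with equality when the `0`-strings of `Γ` form a left prefix. -/
theorem stmt_9 (δ : ℝ) (hδ0 : 0 < δ) (hδ : δ < 1 / 2) (n : ℕ)
    (Γ : (Fin n → Bool) → Bool) (xb : Fin n → Bool)
    (hx : (univ.filter fun c => Γ c = false).card = binVal xb) :
    valD δ xb ≤ sSup (binPrSet δ Γ) ∧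
    ((∀ y : Fin n → Bool, (Γ y = false ↔ binVal y < binVal xb)) →
      sSup (binPrSet δ Γ) = valD δ xb) := by
  have hbdd : BddAbove (binPrSet δ Γ) := by
    refine ⟨1, ?_⟩
    rintro r ⟨q, hq, rfl⟩
    exact prZero_le_one δ hδ0 q hq Γ
  obtain ⟨q, hq, hle⟩ := exists_strat δ hδ0 hδ Γ
  rw [hx, ← valD_eq_fval δ hδ] at hle
  have hlow : valD δ xb ≤ sSup (binPrSet δ Γ) := hle.trans (le_csSup hbdd ⟨q, hq, rfl⟩)
  refine ⟨hlow, fun hΓ => le_antisymm (csSup_le ⟨_, q, hq, rfl⟩ ?_) hlow⟩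
  rintro r ⟨q', hq', rfl⟩
  rw [valD_eq_fval δ hδ]
  exact prZero_prefix_le δ hδ0 hδ q' hq' Γ _ hΓ
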